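/- arXiv:math/0702077 — 4 statements merged into one kernel-verified Lean document; each statement's English description precedes it below -/
import Mathlib

section
/- For all u, X ∈ ℝ⁷ and every k: (1/6) Σ_{a,b} (u_φ X_φ − X_φ u_φ)_{ab} φ_{kab} = (u × X)_k. In other words, the Ω²₇-component of the matrix commutator [u_φ, X_φ], regarded as a vector via Y ↦ Y_φ, equals the cross product u × X. -/
open Finset

noncomputable section

def phi0 : Fin 7 → Fin 7 → Fin 7 → ℝ := fun i j k =>
  if (i, j, k) = (0, 1, 2) then -1
  else if (i, j, k) = (0, 3, 4) then -1
  else if (i, j, k) = (0, 5, 6) then -1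
  else if (i, j, k) = (1, 3, 5) then -1
  else if (i, j, k) = (1, 4, 6) then 1
  else if (i, j, k) = (2, 3, 6) then 1
  else if (i, j, k) = (2, 4, 5) then 1
  else 0

/-- The standard G₂ 3-form on ℝ⁷ (paper's orientation convention), as a totally
antisymmetric array with `φ₁₂₃ = φ₁₄₅ = φ₁₆₇ = φ₂₄₆ = −1`, `φ₂₅₇ = φ₃₄₇ = φ₃₅₆ = 1`
(indices shifted to start at 0). -/
def phi (i j k : Fin 7) : ℝ :=
  ∑ σ : Equiv.Perm (Fin 3),
    ((Equiv.Perm.sign σ : ℤ) : ℝ) *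
      phi0 (![i, j, k] (σ 0)) (![i, j, k] (σ 1)) (![i, j, k] (σ 2))

def psi0 : Fin 7 → Fin 7 → Fin 7 → Fin 7 → ℝ := fun i j k l =>
  if (i, j, k, l) = (0, 1, 3, 6) then 1
  else if (i, j, k, l) = (0, 1, 4, 5) then 1
  else if (i, j, k, l) = (0, 2, 3, 5) then 1
  else if (i, j, k, l) = (0, 2, 4, 6) then -1
  else if (i, j, k, l) = (1, 2, 3, 4) then -1
  else if (i, j, k, l) = (1, 2, 5, 6) then -1
  else if (i, j, k, l) = (3, 4, 5, 6) then -1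
  else 0

/-- The dual 4-form ψ = ∗φ of the standard G₂-structure, as a totally antisymmetric
array with `ψ₁₂₄₇ = ψ₁₂₅₆ = ψ₁₃₄₆ = 1`, `ψ₁₃₅₇ = ψ₂₃₄₅ = ψ₂₃₆₇ = ψ₄₅₆₇ = −1`
(indices shifted to start at 0). -/
def psi (i j k l : Fin 7) : ℝ :=
  ∑ σ : Equiv.Perm (Fin 4),
    ((Equiv.Perm.sign σ : ℤ) : ℝ) *
      psi0 (![i, j, k, l] (σ 0)) (![i, j, k, l] (σ 1)) (![i, j, k, l] (σ 2))
        (![i, j, k, l] (σ 3))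

/-- Kronecker delta. -/
def kdelta (i j : Fin 7) : ℝ := if i = j then 1 else 0

/-- The G₂ cross product on ℝ⁷: `(u × v)_k = Σ_{i,j} φ_{ijk} u_i v_j`. -/
def cross (u v : Fin 7 → ℝ) : Fin 7 → ℝ := fun k =>
  ∑ i, ∑ j, phi i j k * u i * v j

/-- Euclidean inner product on ℝ⁷. -/
def dot (u v : Fin 7 → ℝ) : ℝ := ∑ i, u i * v i

end

/-!
The only property of `φ` that matters is that it is the structure tensor of a cross product: it is
totally skew, and `∑ m, φ i a m * φ b j m` is, up to Kronecker deltas, skew under the exchange of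
`i` and `b`. Since `φ j m b = φ b j m`, this exchange turns `∑ φ i a m * φ j m b * φ k a b` into
`∑ φ i j m * φ m a b * φ k a b`, where the sum over `a, b` is `(n - 1)` times the Kronecker delta of
`m` and `k`; the correction terms contribute `-3 * φ i j k`. Hence the triple contraction is
`(n - 4) * φ i j k`, the commutator doubles it, and `n = 7` gives the factor 6.
-/

section Matrix

variable {ι R : Type*} [Fintype ι] [CommRing R]

theorem trace_commutator_mul_of_transpose_eq_neg {A B C : Matrix ι ι R}
    (hA : A.transpose = -A) (hB : B.transpose = -B) (hC : C.transpose = -C) :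
    ((A * B - B * A) * C).trace = 2 * (A * B * C).trace := by
  have reverse : (B * A * C).trace = -(A * B * C).trace := by
    rw [← Matrix.trace_transpose, Matrix.transpose_mul, Matrix.transpose_mul, hA, hB, hC,
      neg_mul_neg, neg_mul, Matrix.trace_neg, Matrix.trace_mul_comm]
  rw [Matrix.sub_mul, Matrix.trace_sub, reverse]
  ring

/-- The matrix `u_φ` of the 2-form obtained by inserting `u` into the first slot of `φ`. -/
def insertLeft (φ : ι → ι → ι → R) (u : ι → R) : Matrix ι ι R :=
  Matrix.of fun a b => ∑ l, u l * φ l a b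

theorem insertLeft_eq_sum_smul (φ : ι → ι → ι → R) (u : ι → R) :
    insertLeft φ u = ∑ l, u l • Matrix.of (φ l) := by
  ext a b
  simp [insertLeft, Matrix.sum_apply]

theorem insertLeft_mul_insertLeft (φ : ι → ι → ι → R) (u v : ι → R) :
    insertLeft φ u * insertLeft φ v =
      ∑ i, ∑ j, (u i * v j) • (Matrix.of (φ i) * Matrix.of (φ j)) := by
  simp only [insertLeft_eq_sum_smul, sum_mul_sum, smul_mul_smul_comm]

end Matrix

/-- The structure constants `φ i j k = ⟨eᵢ × eⱼ, eₖ⟩` of a vector cross product: a totally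
skew-symmetric array such that `⟨u × v, u × w⟩ = ⟨u, u⟩⟨v, w⟩ - ⟨u, v⟩⟨u, w⟩`. The latter is encoded
as its polarization in `u`, evaluated on basis vectors. -/
structure IsCrossProductTensor {ι R : Type*} [Fintype ι] [DecidableEq ι] [CommRing R]
    (φ : ι → ι → ι → R) : Prop where
  swap_left (i j k : ι) : φ j i k = -φ i j k
  swap_right (i j k : ι) : φ i k j = -φ i j k
  polarized_lagrange (i j a b : ι) :
    ∑ m, φ i a m * φ j b m + ∑ m, φ j a m * φ i b m =
      (if i = j ∧ a = b then 2 else 0) - (if i = a ∧ j = b then 1 else 0)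
        - (if i = b ∧ j = a then 1 else 0)

namespace IsCrossProductTensor

variable {ι R S : Type*} [Fintype ι] [DecidableEq ι] [CommRing R] [CommRing S]
variable {φ : ι → ι → ι → R}

theorem map (hφ : IsCrossProductTensor φ) (f : R →+* S) :
    IsCrossProductTensor fun i j k => f (φ i j k) where
  swap_left i j k := by rw [hφ.swap_left, map_neg]
  swap_right i j k := by rw [hφ.swap_right, map_neg]
  polarized_lagrange i j a b := by
    simpa [apply_ite f, map_ofNat f] using congrArg f (hφ.polarized_lagrange i j a b)

theorem cyclic (hφ : IsCrossProductTensor φ) (i j k : ι) : φ j k i = φ i j k := by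
  rw [hφ.swap_right, hφ.swap_left, neg_neg]

-- Multiples by 2 appear here and below because `R` may have 2-torsion.
theorem two_mul_apply_self (hφ : IsCrossProductTensor φ) (i a : ι) : 2 * φ i a a = 0 := by
  rw [two_mul, add_eq_zero_iff_eq_neg]
  exact hφ.swap_right i a a

theorem two_mul_sum_mul (hφ : IsCrossProductTensor φ) (i j : ι) :
    2 * ∑ a, ∑ b, φ i a b * φ j a b =
      if i = j then 2 * ((Fintype.card ι : R) - 1) else 0 := by
  calc 2 * ∑ a, ∑ b, φ i a b * φ j a b
      = ∑ a, (∑ b, φ i a b * φ j a b + ∑ b, φ j a b * φ i a b) := by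
        simp only [mul_comm (φ j _ _), ← two_mul, mul_sum]
    _ = ∑ a, ((if i = j then 2 else 0) - 2 * if i = a then (if j = a then 1 else 0) else 0) := by
        simp only [hφ.polarized_lagrange, and_true, ite_and, sub_sub, two_mul]
    _ = if i = j then 2 * ((Fintype.card ι : R) - 1) else 0 := by
        simp only [sum_sub_distrib, ← mul_sum, sum_ite_eq, sum_const, card_univ, mem_univ,
          nsmul_eq_mul, eq_comm (a := j), if_true]
        split_ifs <;> ring

theorem sum_mul_sub_sum_mul (hφ : IsCrossProductTensor φ) (i j a b : ι) :
    ∑ m, φ i a m * φ j m b - ∑ m, φ i j m * φ m a b =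
      (if i = b ∧ a = j then 2 else 0) - (if i = a ∧ b = j then 1 else 0)
        - (if i = j ∧ b = a then 1 else 0) := by
  rw [← hφ.polarized_lagrange i b a j, sub_eq_add_neg, ← sum_neg_distrib]
  congr! 2 with m _ m _
  · rw [hφ.cyclic b j m]
  · rw [hφ.swap_left a b m, hφ.cyclic m a b]
    ring

theorem sum_triple_sub_sum_mul (hφ : IsCrossProductTensor φ) (i j k : ι) :
    ∑ a, ∑ b, (∑ m, φ i a m * φ j m b) * φ k a b
        - ∑ m, φ i j m * ∑ a, ∑ b, φ m a b * φ k a b =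
      -3 * φ i j k - if i = j then ∑ a, φ k a a else 0 := by
  have sum_swap : ∑ m, φ i j m * ∑ a, ∑ b, φ m a b * φ k a b =
      ∑ a, ∑ b, (∑ m, φ i j m * φ m a b) * φ k a b := by
    simp only [mul_sum, sum_mul, mul_assoc]
    rw [sum_comm]
    exact sum_congr rfl fun a _ => sum_comm
  rw [sum_swap]
  simp only [← sum_sub_distrib, ← sub_mul, hφ.sum_mul_sub_sum_mul]
  simp only [sub_mul, sum_sub_distrib, ite_and, ite_mul, zero_mul, one_mul]
  simp only [sum_ite_eq', sum_ite_irrel, sum_const_zero, sum_ite_eq, mem_univ, if_true]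
  rw [hφ.swap_right k i j, hφ.cyclic k i j]
  ring

theorem two_mul_sum_triple (hφ : IsCrossProductTensor φ) (i j k : ι) :
    2 * ∑ a, ∑ b, (∑ m, φ i a m * φ j m b) * φ k a b =
      2 * ((Fintype.card ι : R) - 4) * φ i j k := by
  have trace_term : 2 * (∑ m, φ i j m * ∑ a, ∑ b, φ m a b * φ k a b) =
      2 * ((Fintype.card ι : R) - 1) * φ i j k := by
    rw [mul_sum]
    simp only [mul_left_comm (2 : R), hφ.two_mul_sum_mul, mul_ite, mul_zero,
      sum_ite_eq', mem_univ, if_true]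
    ring
  have diagonal_term : 2 * (if i = j then ∑ a, φ k a a else 0) = 0 := by
    simp [mul_sum, hφ.two_mul_apply_self]
  linear_combination 2 * hφ.sum_triple_sub_sum_mul i j k + trace_term - diagonal_term

theorem transpose_of (hφ : IsCrossProductTensor φ) (i : ι) :
    (Matrix.of (φ i)).transpose = -Matrix.of (φ i) := by
  ext a b
  exact hφ.swap_right i a b

theorem transpose_insertLeft (hφ : IsCrossProductTensor φ) (u : ι → R) :
    (insertLeft φ u).transpose = -insertLeft φ u := by
  simp only [insertLeft_eq_sum_smul, Matrix.transpose_sum, Matrix.transpose_smul, hφ.transpose_of,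
    smul_neg, sum_neg_distrib]

theorem two_mul_trace_insertLeft_mul (hφ : IsCrossProductTensor φ) (u v : ι → R) (k : ι) :
    2 * (insertLeft φ u * insertLeft φ v * (Matrix.of (φ k)).transpose).trace =
      2 * ((Fintype.card ι : R) - 4) * ∑ i, ∑ j, φ i j k * u i * v j := by
  have basis_case (i j : ι) :
      2 * (Matrix.of (φ i) * Matrix.of (φ j) * (Matrix.of (φ k)).transpose).trace =
        2 * ((Fintype.card ι : R) - 4) * φ i j k :=
    hφ.two_mul_sum_triple i j k
  simp only [insertLeft_mul_insertLeft, sum_mul, Matrix.trace_sum, Matrix.smul_mul,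
    Matrix.trace_smul, smul_eq_mul, mul_sum]
  refine sum_congr rfl fun i _ => sum_congr rfl fun j _ => ?_
  linear_combination u i * v j * basis_case i j

end IsCrossProductTensor

theorem pi7_commutator_cross_general {ι R : Type*} [Fintype ι] [DecidableEq ι] [CommRing R]
    {φ : ι → ι → ι → R} (hφ : IsCrossProductTensor φ) (u X : ι → R) (k : ι) :
    ∑ a, ∑ b,
      ((∑ m, (∑ l, u l * φ l a m) * (∑ l, X l * φ l m b))
        - ∑ m, (∑ l, X l * φ l a m) * (∑ l, u l * φ l m b)) * φ k a b
      = 2 * ((Fintype.card ι : R) - 4) * ∑ i, ∑ j, φ i j k * u i * X j := by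
  rw [← hφ.two_mul_trace_insertLeft_mul u X k, ← trace_commutator_mul_of_transpose_eq_neg
    (hφ.transpose_insertLeft u) (hφ.transpose_insertLeft X)
    (by rw [Matrix.transpose_transpose, hφ.transpose_of, neg_neg])]
  rfl

section Antisymmetrization

variable {ι M : Type*} [AddCommGroup M]

/-- The alternating sum of a three-index array over the permutations of its slots. -/
def antisymmetrize (f : ι → ι → ι → M) (i j k : ι) : M :=
  f i j k + f j k i + f k i j - f j i k - f i k j - f k j i

theorem antisymmetrize_swap_left (f : ι → ι → ι → M) (i j k : ι) :
    antisymmetrize f j i k = -antisymmetrize f i j k := by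
  simp only [antisymmetrize]
  abel

theorem antisymmetrize_swap_right (f : ι → ι → ι → M) (i j k : ι) :
    antisymmetrize f i k j = -antisymmetrize f i j k := by
  simp only [antisymmetrize]
  abel

theorem univ_perm_fin_three : (univ : Finset (Equiv.Perm (Fin 3))) =
    {1, Equiv.swap 0 1, Equiv.swap 1 2, Equiv.swap 0 2, Equiv.swap 0 1 * Equiv.swap 1 2,
      Equiv.swap 1 2 * Equiv.swap 0 1} := by
  decide

theorem sum_perm_sign_mul_eq_antisymmetrize {R : Type*} [Ring R] (f : ι → ι → ι → R)
    (i j k : ι) :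
    ∑ σ : Equiv.Perm (Fin 3), ((Equiv.Perm.sign σ : ℤ) : R) *
      f (![i, j, k] (σ 0)) (![i, j, k] (σ 1)) (![i, j, k] (σ 2)) = antisymmetrize f i j k := by
  rw [univ_perm_fin_three]
  repeat rw [sum_insert (by decide)]
  simp only [antisymmetrize, sum_singleton, Equiv.Perm.coe_one, Equiv.Perm.coe_mul, id_eq,
    Function.comp_apply, Equiv.swap_apply_def, Fin.isValue, Fin.reduceEq, ↓reduceIte,
    Matrix.cons_val, Equiv.Perm.sign_one, Equiv.Perm.sign_mul, Equiv.Perm.sign_swap', mul_neg,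
    mul_one, neg_neg, Units.val_neg, Units.val_one, Int.cast_neg, Int.cast_one, neg_mul, one_mul]
  abel

end Antisymmetrization

/-- The integer-valued copy of `phi0`, on which identities can be checked by evaluation. -/
def phi0Int (i j k : Fin 7) : ℤ :=
  if (i, j, k) = (0, 1, 2) then -1
  else if (i, j, k) = (0, 3, 4) then -1
  else if (i, j, k) = (0, 5, 6) then -1
  else if (i, j, k) = (1, 3, 5) then -1
  else if (i, j, k) = (1, 4, 6) then 1
  else if (i, j, k) = (2, 3, 6) then 1
  else if (i, j, k) = (2, 4, 5) then 1
  else 0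

theorem phi0_eq_cast (i j k : Fin 7) : phi0 i j k = phi0Int i j k := by
  simp only [phi0, phi0Int]
  push_cast
  rfl

theorem isCrossProductTensor_antisymmetrize_phi0Int :
    IsCrossProductTensor (antisymmetrize phi0Int) where
  swap_left := antisymmetrize_swap_left phi0Int
  swap_right := antisymmetrize_swap_right phi0Int
  polarized_lagrange := by decide +kernel

theorem phi_eq_cast_antisymmetrize (i j k : Fin 7) :
    phi i j k = (antisymmetrize phi0Int i j k : ℤ) := by
  rw [phi, sum_perm_sign_mul_eq_antisymmetrize]
  simp only [antisymmetrize, phi0_eq_cast, Int.cast_add, Int.cast_sub]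

theorem isCrossProductTensor_phi : IsCrossProductTensor phi := by
  simpa only [eq_intCast, ← phi_eq_cast_antisymmetrize] using
    isCrossProductTensor_antisymmetrize_phi0Int.map (Int.castRingHom ℝ)

/-- Equation `pi7commutatorcrosseq`: the Ω²₇-part of the commutator [u_φ, X_φ],
regarded as a vector, is the cross product u × X. -/
theorem pi7_commutator_cross (u X : Fin 7 → ℝ) (k : Fin 7) :
    (1/6) * ∑ a, ∑ b,
      ((∑ m, (∑ l, u l * phi l a m) * (∑ l, X l * phi l m b))
        - ∑ m, (∑ l, X l * phi l a m) * (∑ l, u l * phi l m b)) * phi k a b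
      = cross u X k := by
  rw [pi7_commutator_cross_general isCrossProductTensor_phi, cross, Fintype.card_fin]
  ring
end

section
/- Let f and h be symmetric real 7×7 matrices and define the totally antisymmetric 3-tensors F_{ijk} = Σ_l (f_{il} φ_{ljk} + f_{jl} φ_{ilk} + f_{kl} φ_{ijl}) and H_{ijk} = Σ_l (h_{il} φ_{ljk} + h_{jl} φ_{ilk} + h_{kl} φ_{ijl}) (the components of the 3-forms i(f) and i(h)). Then (1/6) Σ_{i,j,k} F_{ijk} H_{ijk} = tr(f) tr(h) + 2 tr(f h). -/
open Finset

/-!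
The Lagrange identity `|u × v|² = |u|² |v|² - ⟨u, v⟩²`, polarized, gives all the contractions of
`φ` with itself that are needed, so the formula holds for every vector cross product. Writing
`i(f)` as the cyclic sum of `P_{ijk} = ∑_l f_{il} φ_{ljk}` and `i(h)` as that of `Q`, the pairing
becomes `3 ∑ P_{ijk} (Q_{ijk} + Q_{jki} + Q_{kij})`. The first product contracts `φ` with itself
over two indices. The other two agree by antisymmetry and contract over one index only, where the
Lagrange identity determines just the part symmetric under exchanging two free indices; this
suffices because `f` is symmetric.
-/

open Matrix

section FiniteSums

variable {ι κ R : Type*} [Fintype ι] [Fintype κ] [CommSemiring R]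

theorem sum_cyclic {M : Type*} [AddCommMonoid M] (G : ι → ι → ι → M) :
    ∑ i, ∑ j, ∑ k, G j k i = ∑ i, ∑ j, ∑ k, G i j k := by
  rw [sum_comm]
  exact sum_congr rfl fun _ _ ↦ sum_comm

theorem sum_cyclicSum_mul_cyclicSum (P Q : ι → ι → ι → R) :
    ∑ i, ∑ j, ∑ k, (P i j k + P j k i + P k i j) * (Q i j k + Q j k i + Q k i j) =
      3 * ∑ i, ∑ j, ∑ k, P i j k * (Q i j k + Q j k i + Q k i j) := by
  let G i j k := P i j k * (Q i j k + Q j k i + Q k i j)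
  have expand i j k : (P i j k + P j k i + P k i j) * (Q i j k + Q j k i + Q k i j) =
      G i j k + G j k i + G k i j := by
    simp only [G]
    ring
  have shift_twice : ∑ i, ∑ j, ∑ k, G k i j = ∑ i, ∑ j, ∑ k, G i j k :=
    (sum_cyclic fun i j k ↦ G k i j).symm
  simp only [expand, sum_add_distrib]
  rw [sum_cyclic G, shift_twice]
  ring

theorem sum_sum_mul_mul_sum_mul (a b : ι → R) (A B : ι → κ → R) :
    ∑ p, (∑ l, a l * A l p) * (∑ m, b m * B m p) =
      ∑ l, a l * ∑ m, b m * ∑ p, A l p * B m p := by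
  calc ∑ p, (∑ l, a l * A l p) * (∑ m, b m * B m p)
      = ∑ p, ∑ l, ∑ m, a l * (b m * (A l p * B m p)) := by
        simp only [sum_mul_sum, mul_assoc, mul_left_comm]
    _ = ∑ l, ∑ m, ∑ p, a l * (b m * (A l p * B m p)) := by
        rw [sum_comm]
        exact sum_congr rfl fun _ _ ↦ sum_comm
    _ = ∑ l, a l * ∑ m, b m * ∑ p, A l p * B m p := by
        simp only [mul_sum]

theorem two_mul_sum_mul_of_isSymm {f : Matrix ι ι R} (hf : f.IsSymm) (T : ι → ι → R) :
    2 * ∑ i, ∑ l, f i l * T i l = ∑ i, ∑ l, f i l * (T i l + T l i) := by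
  have swap : ∑ i, ∑ l, f i l * T l i = ∑ i, ∑ l, f i l * T i l := by
    rw [sum_comm]
    simp only [hf.apply]
  simp only [mul_add, sum_add_distrib]
  rw [swap, two_mul]

theorem trace_mul_transpose_of_isSymm {f : Matrix ι ι R} (hf : f.IsSymm) (h : Matrix ι ι R) :
    trace (f * hᵀ) = trace (f * h) := by
  rw [← trace_transpose_mul, hf.eq, transpose_transpose]

end FiniteSums

section SlotActions

variable {ι R : Type*} [Fintype ι] [CommRing R] {φ : ι → ι → ι → R}

/-- The action of a matrix on the first slot of a 3-tensor. -/
def firstSlotAction (f : Matrix ι ι R) (φ : ι → ι → ι → R) (i j k : ι) : R :=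
  ∑ l, f i l * φ l j k

/-- The action of a matrix on a 3-tensor as a derivation, that is, the sum of its actions on
the three slots. For a 3-form `φ` this is the paper's 3-form `i(f)`. -/
def derivationAction (f : Matrix ι ι R) (φ : ι → ι → ι → R) (i j k : ι) : R :=
  ∑ l, (f i l * φ l j k + f j l * φ i l k + f k l * φ i j l)

theorem derivationAction_eq_cyclicSum (hφ : ∀ i j k, φ i j k = φ j k i)
    (f : Matrix ι ι R) (i j k : ι) :
    derivationAction f φ i j k =
      firstSlotAction f φ i j k + firstSlotAction f φ j k i + firstSlotAction f φ k i j := by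
  simp only [derivationAction, firstSlotAction, sum_add_distrib, hφ i _ k,
    ← hφ _ i j]

theorem firstSlotAction_antisymm (hφ : ∀ i j k, φ i j k = -φ i k j)
    (f : Matrix ι ι R) (i j k : ι) :
    firstSlotAction f φ i j k = -firstSlotAction f φ i k j := by
  simp only [firstSlotAction, hφ _ j k, mul_neg, sum_neg_distrib]

theorem sum_firstSlotAction_mul_shift (hφ : ∀ i j k, φ i j k = φ j k i)
    (f h : Matrix ι ι R) :
    ∑ i, ∑ j, ∑ k, firstSlotAction f φ i j k * firstSlotAction h φ j k i =
      ∑ i, ∑ l, f i l * ∑ j, ∑ m, h j m * ∑ k, φ l j k * φ i m k := by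
  have contract i j : ∑ k, firstSlotAction f φ i j k * firstSlotAction h φ j k i =
      ∑ l, f i l * ∑ m, h j m * ∑ k, φ l j k * φ i m k := by
    simp only [hφ i]
    exact sum_sum_mul_mul_sum_mul (f i) (h j) (fun l k ↦ φ l j k) fun m k ↦ φ m k i
  refine sum_congr rfl fun i _ ↦ ?_
  simp only [contract, mul_sum univ _ (f i _)]
  exact sum_comm

theorem sum_firstSlotAction_mul_shift_shift (hφ : ∀ i j k, φ i j k = -φ i k j)
    (f h : Matrix ι ι R) :
    ∑ i, ∑ j, ∑ k, firstSlotAction f φ i j k * firstSlotAction h φ k i j =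
      ∑ i, ∑ j, ∑ k, firstSlotAction f φ i j k * firstSlotAction h φ j k i := by
  refine sum_congr rfl fun i _ ↦ ?_
  rw [sum_comm]
  refine sum_congr rfl fun j _ ↦ sum_congr rfl fun k _ ↦ ?_
  rw [firstSlotAction_antisymm hφ f i k j, firstSlotAction_antisymm hφ h j i k, neg_mul_neg]

end SlotActions

section LagrangeForm

variable {ι : Type*} (R : Type*) [DecidableEq ι] [CommRing R]

/-- The right-hand side `|u|² |v|² - ⟨u, v⟩²` of the Lagrange identity, polarized in `u` and in
`v` and evaluated at `u = eᵢ, eₗ` and `v = eⱼ, eₘ`. Entries of the identity matrix serve as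
Kronecker deltas. -/
def lagrangeForm (i j l m : ι) : R :=
  2 * ((1 : Matrix ι ι R) i l * (1 : Matrix ι ι R) j m) -
    (1 : Matrix ι ι R) i j * (1 : Matrix ι ι R) l m -
    (1 : Matrix ι ι R) i m * (1 : Matrix ι ι R) l j

variable {R}

theorem sum_lagrangeForm_diag [Fintype ι] (l m : ι) :
    ∑ j, lagrangeForm R l j m j = 2 * (Fintype.card ι - 1) * (1 : Matrix ι ι R) l m := by
  have sum_delta : ∑ j, (1 : Matrix ι ι R) l j * (1 : Matrix ι ι R) m j =
      (1 : Matrix ι ι R) l m := by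
    simp [one_apply]
  simp only [lagrangeForm, one_apply_eq, sum_sub_distrib, sum_delta, sum_const, card_univ,
    nsmul_eq_mul]
  ring

theorem sum_mul_lagrangeForm [Fintype ι] (h : Matrix ι ι R) (i l : ι) :
    ∑ j, ∑ m, h j m * lagrangeForm R l j i m =
      2 * trace h * (1 : Matrix ι ι R) l i - h l i - h i l := by
  simp [lagrangeForm, mul_sub, sum_sub_distrib, one_apply, trace, ← sum_mul, mul_comm (2 : R)]

theorem sum_mul_sum_mul_lagrangeForm [Fintype ι] (f h : Matrix ι ι R) :
    ∑ i, ∑ l, f i l * ∑ j, ∑ m, h j m * lagrangeForm R l j i m =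
      2 * (trace f * trace h) - trace (f * h) - trace (f * hᵀ) := by
  simp [sum_mul_lagrangeForm, mul_sub, sum_sub_distrib, one_apply, trace, mul_apply, ← sum_mul,
    mul_left_comm (2 : R)]

end LagrangeForm

/-- The array `φ i j k = ⟨eᵢ × eⱼ, eₖ⟩` of a vector cross product in an orthonormal basis.
The field `lagrange` is the polarized form of `|u × v|² = |u|² |v|² - ⟨u, v⟩²`. -/
structure IsVectorCrossProduct {ι R : Type*} [Fintype ι] [DecidableEq ι] [CommRing R]
    (φ : ι → ι → ι → R) : Prop where
  cyclic (i j k : ι) : φ i j k = φ j k i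
  antisymm (i j k : ι) : φ i j k = -φ i k j
  lagrange (i j l m : ι) :
    ∑ k, φ i j k * φ l m k + ∑ k, φ l j k * φ i m k = lagrangeForm R i j l m

namespace IsVectorCrossProduct

variable {ι R : Type*} [Fintype ι] [DecidableEq ι] [CommRing R] {φ : ι → ι → ι → R}

theorem map {S : Type*} [CommRing S] (hφ : IsVectorCrossProduct φ) (g : R →+* S) :
    IsVectorCrossProduct fun i j k ↦ g (φ i j k) where
  cyclic i j k := congrArg g (hφ.cyclic i j k)
  antisymm i j k := by rw [hφ.antisymm, map_neg]
  lagrange i j l m := by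
    simpa [lagrangeForm, one_apply, apply_ite g, map_ofNat] using congrArg g (hφ.lagrange i j l m)

theorem two_mul_sum_sum_mul (hφ : IsVectorCrossProduct φ) (l m : ι) :
    2 * ∑ j, ∑ k, φ l j k * φ m j k =
      2 * (Fintype.card ι - 1) * (1 : Matrix ι ι R) l m := by
  rw [← sum_lagrangeForm_diag, mul_sum]
  refine sum_congr rfl fun j _ ↦ ?_
  simp only [← hφ.lagrange, mul_comm (φ m j _), two_mul]

theorem two_mul_sum_firstSlotAction_mul (hφ : IsVectorCrossProduct φ) (f h : Matrix ι ι R) :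
    2 * ∑ i, ∑ j, ∑ k, firstSlotAction f φ i j k * firstSlotAction h φ i j k =
      2 * (Fintype.card ι - 1) * trace (f * hᵀ) := by
  have contract i : ∑ j, ∑ k, firstSlotAction f φ i j k * firstSlotAction h φ i j k =
      ∑ l, f i l * ∑ m, h i m * ∑ j, ∑ k, φ l j k * φ m j k := by
    simpa only [firstSlotAction, Fintype.sum_prod_type] using
      sum_sum_mul_mul_sum_mul (f i) (h i) (fun l (p : ι × ι) ↦ φ l p.1 p.2) fun m p ↦ φ m p.1 p.2
  calc 2 * ∑ i, ∑ j, ∑ k, firstSlotAction f φ i j k * firstSlotAction h φ i j k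
      = ∑ i, ∑ l, f i l * ∑ m, h i m * (2 * ∑ j, ∑ k, φ l j k * φ m j k) := by
        simp only [contract, mul_sum, mul_left_comm (2 : R)]
    _ = ∑ i, ∑ l, f i l * (h i l * (2 * (Fintype.card ι - 1))) := by
        simp [hφ.two_mul_sum_sum_mul, one_apply]
    _ = 2 * (Fintype.card ι - 1) * trace (f * hᵀ) := by
        simp only [trace, diag_apply, mul_apply, transpose_apply, ← mul_assoc, ← sum_mul]
        ring

theorem two_mul_sum_firstSlotAction_mul_shift (hφ : IsVectorCrossProduct φ)
    {f : Matrix ι ι R} (hf : f.IsSymm) (h : Matrix ι ι R) :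
    2 * ∑ i, ∑ j, ∑ k, firstSlotAction f φ i j k * firstSlotAction h φ j k i =
      2 * (trace f * trace h) - 2 * trace (f * h) := by
  rw [sum_firstSlotAction_mul_shift hφ.cyclic, two_mul_sum_mul_of_isSymm hf]
  simp only [← sum_add_distrib, ← mul_add, hφ.lagrange]
  rw [sum_mul_sum_mul_lagrangeForm, trace_mul_transpose_of_isSymm hf]
  ring

end IsVectorCrossProduct

-- Both sides are doubled since `lagrange` determines the contractions only up to 2-torsion.
theorem inner_product_symmetric_three_forms_general {ι R : Type*} [Fintype ι] [DecidableEq ι]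
    [CommRing R] {φ : ι → ι → ι → R} (hφ : IsVectorCrossProduct φ) {f : Matrix ι ι R}
    (hf : f.IsSymm) (h : Matrix ι ι R) :
    2 * ∑ i, ∑ j, ∑ k, derivationAction f φ i j k * derivationAction h φ i j k =
      12 * (trace f * trace h) + 6 * (Fintype.card ι - 3) * trace (f * h) := by
  have unshifted := hφ.two_mul_sum_firstSlotAction_mul f h
  rw [trace_mul_transpose_of_isSymm hf] at unshifted
  have shifted := hφ.two_mul_sum_firstSlotAction_mul_shift hf h
  simp only [derivationAction_eq_cyclicSum hφ.cyclic, sum_cyclicSum_mul_cyclicSum]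
  simp only [mul_add, sum_add_distrib, sum_firstSlotAction_mul_shift_shift hφ.antisymm]
  linear_combination 3 * unshifted + 6 * shifted

theorem sum_perm_fin_three {M : Type*} [AddCommMonoid M] (F : Equiv.Perm (Fin 3) → M) :
    ∑ σ, F σ = F 1 + F (finRotate 3) + F (finRotate 3)⁻¹ +
      F (Equiv.swap 1 2) + F (Equiv.swap 0 2) + F (Equiv.swap 0 1) := by
  have univ_perm : (univ : Finset (Equiv.Perm (Fin 3))) =
    {1, finRotate 3, (finRotate 3)⁻¹, Equiv.swap 1 2, Equiv.swap 0 2, Equiv.swap 0 1} := by decide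
  rw [univ_perm]
  iterate 5 rw [sum_insert (by decide)]
  simp only [sum_singleton, add_assoc]

theorem phi_eq_alternating_sum (i j k : Fin 7) :
    phi i j k = phi0 i j k + phi0 j k i + phi0 k i j - phi0 i k j - phi0 k j i - phi0 j i k := by
  rw [phi, sum_perm_fin_three]
  simp [sign_finRotate, Equiv.swap_apply_def, Equiv.Perm.inv_def, ← sub_eq_add_neg]

/-- The integer version of `phi0`, on which identities can be decided by evaluation. -/
def intPhi0 (i j k : Fin 7) : ℤ :=
  if (i, j, k) ∈ [(0, 1, 2), (0, 3, 4), (0, 5, 6), (1, 3, 5)] then -1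
  else if (i, j, k) ∈ [(1, 4, 6), (2, 3, 6), (2, 4, 5)] then 1
  else 0

/-- The integer version of `phi`, with the sum over permutations written out. -/
def intPhi (i j k : Fin 7) : ℤ :=
  intPhi0 i j k + intPhi0 j k i + intPhi0 k i j - intPhi0 i k j - intPhi0 k j i - intPhi0 j i k

theorem intCast_intPhi0 (i j k : Fin 7) : (intPhi0 i j k : ℝ) = phi0 i j k := by
  simp only [intPhi0, phi0, List.mem_cons, List.not_mem_nil, or_false]
  split_ifs <;> simp_all

theorem intCast_intPhi (i j k : Fin 7) : (intPhi i j k : ℝ) = phi i j k := by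
  simp only [intPhi, Int.cast_sub, Int.cast_add, intCast_intPhi0, phi_eq_alternating_sum]

theorem isVectorCrossProduct_intPhi : IsVectorCrossProduct intPhi where
  cyclic i j k := by
    unfold intPhi
    ring
  antisymm i j k := by
    unfold intPhi
    ring
  lagrange := by
    unfold lagrangeForm
    decide +kernel

theorem isVectorCrossProduct_phi : IsVectorCrossProduct phi := by
  simpa only [eq_intCast, intCast_intPhi] using isVectorCrossProduct_intPhi.map (Int.castRingHom ℝ)

/-- Proposition `symmmetricprop`: the inner product of the 3-forms i(f) and i(h)
associated to symmetric matrices f, h equals tr(f) tr(h) + 2 tr(f h). -/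
theorem inner_product_symmetric_three_forms (f h : Fin 7 → Fin 7 → ℝ)
    (hf : ∀ i j, f j i = f i j) (hh : ∀ i j, h j i = h i j) :
    (1/6) * ∑ i, ∑ j, ∑ k,
      (∑ l, (f i l * phi l j k + f j l * phi i l k + f k l * phi i j l)) *
      (∑ l, (h i l * phi l j k + h j l * phi i l k + h k l * phi i j l))
      = (∑ i, f i i) * (∑ i, h i i) + 2 * ∑ i, ∑ j, f i j * h j i := by
  have general := inner_product_symmetric_three_forms_general isVectorCrossProduct_phi
    (f := of f) (IsSymm.ext hf) (of h)
  simp only [derivationAction, of_apply, trace, diag_apply, mul_apply, Fintype.card_fin] at general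
  linear_combination general / 12
end

section
/- Let h be a symmetric real 7×7 matrix, let X ∈ ℝ⁷, and define the totally antisymmetric 3-tensor η_{ijk} = Σ_l (h_{il} φ_{ljk} + h_{jl} φ_{ilk} + h_{kl} φ_{ijl}) + Σ_n X_n ψ_{nijk} (the general 3-form η = i(h) + X⌐ψ). Then for all a,b: (1/24) Σ_{σ∈S₇} sgn(σ) φ_{a σ(1) σ(2)} φ_{b σ(3) σ(4)} η_{σ(5) σ(6) σ(7)} = −2 tr(h) δ_{ab} − 4 h_{ab}. (This is the formula j(i(h) + X⌐ψ) = −2 tr(h) g − 4 h; in particular Ω³₇ lies in the kernel of j and j is injective on Ω³₁ ⊕ Ω³₂₇.) -/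
open Finset

/-!
Antisymmetrizing over eight indices in seven dimensions gives zero. Applied to
`φ_{a··} φ_{b··} η_{···}`, with `a` moved in turn into each of the seven contracted slots, this
expresses `j(η)` through sums in which all three indices of the first `φ` are contracted. Such sums
are pairings with `ψ = ∗φ`, and the identity `Σₘ φᵢⱼₘ φₖₗₘ = δᵢₖ δⱼₗ - δᵢₗ δⱼₖ - ψᵢⱼₖₗ` with its
traces reduces them, for every 3-form `η`, to
`j(η)_{ab} = (1/6) Σ φ_{bam} ψ_{mijk} η_{ijk} - Σ φ_{bij} η_{aij}`.
For `η = i(h)` the first sum vanishes by the symmetry of `h` and the second is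
`2 tr(h) δ_{ab} + 4 h_{ab}`; for `η = X⌟ψ` the two sums cancel.
-/

open Equiv Equiv.Perm

/-! ### Signed sums over permutations -/

section PermutationSums

variable {ι κ R : Type*}

lemma exists_perm_comp_eq [Finite ι] {s v : κ → ι} (hs : s.Injective) (hv : v.Injective) :
    ∃ τ : Perm ι, τ ∘ s = v := by
  classical
  refine ⟨((ofInjective s hs).symm.trans (ofInjective v hv)).extendSubtype, funext fun x => ?_⟩
  rw [Function.comp_apply, extendSubtype_apply_of_mem _ _ (Set.mem_range_self x),
    trans_apply, ofInjective_symm_apply, ofInjective_apply]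

variable [Fintype ι] [DecidableEq ι] [Ring R]

lemma sum_sign_mul_comp_perm (τ : Perm ι) (F : (ι → ι) → R) :
    ∑ σ : Perm ι, ((sign σ : ℤ) : R) * F (σ ∘ τ) =
      ((sign τ : ℤ) : R) * ∑ σ : Perm ι, ((sign σ : ℤ) : R) * F σ := by
  rw [← Equiv.sum_comp (Equiv.mulRight τ) (fun σ => ((sign σ : ℤ) : R) * F σ), mul_sum]
  refine sum_congr rfl fun σ _ => ?_
  rw [Equiv.coe_mulRight, Perm.sign_mul, Perm.coe_mul, ← mul_assoc]
  congr 1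
  rcases Int.units_eq_one_or (sign τ) with h | h <;> simp [h]

-- The terms cancel in pairs under `(σ, i) ↦ (σ ∘ swap i j, j)` with `j = σ⁻¹ a`.
lemma sum_sign_mul_update_of_apply_ne (G : ι → (ι → ι) → R) (a : ι) :
    ∑ x : Perm ι × ι with x.1 x.2 ≠ a,
      ((sign x.1 : ℤ) : R) * G (x.1 x.2) (Function.update x.1 x.2 a) = 0 := by
  have h_ne : ∀ (σ : Perm ι) i, σ i ≠ a → i ≠ σ.symm a := fun σ i h h_eq =>
    h (h_eq ▸ σ.apply_symm_apply a)
  refine sum_involution (fun x _ => (x.1 * swap x.2 (x.1.symm a), x.1.symm a)) ?_ ?_ ?_ ?_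
  · rintro ⟨σ, i⟩ h
    have hi := h_ne σ i (mem_filter.1 h).2
    have h_update : Function.update (σ ∘ swap i (σ.symm a)) (σ.symm a) a =
        Function.update σ i a := by
      funext k
      rcases eq_or_ne k (σ.symm a) with rfl | hk
      · simp [Function.update_of_ne hi.symm]
      rcases eq_or_ne k i with rfl | hki
      · simp [Function.update_of_ne hk]
      · simp [Function.update_of_ne, hk, hki, swap_apply_of_ne_of_ne]
    simp [h_update, sign_swap hi]
  · rintro ⟨σ, i⟩ h - h_eq
    exact h_ne σ i (mem_filter.1 h).2 (congrArg Prod.snd h_eq).symm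
  · rintro ⟨σ, i⟩ h
    simpa using h
  · rintro ⟨σ, i⟩ -
    have h_symm : (σ * swap i (σ.symm a)).symm a = i := by simp [symm_apply_eq]
    simp only [h_symm]
    rw [mul_assoc, swap_comm i, swap_mul_self, mul_one]

-- `card ι + 1` indices cannot be antisymmetrized over `ι`; the left side is the term of that
-- vanishing sum in which `a` stays outside the permuted slots.
lemma sum_sign_mul_eq_sum_update (G : ι → (ι → ι) → R) (a : ι) :
    ∑ σ : Perm ι, ((sign σ : ℤ) : R) * G a σ =
      ∑ i, ∑ σ : Perm ι, ((sign σ : ℤ) : R) * G (σ i) (Function.update σ i a) := by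
  rw [sum_comm, ← Fintype.sum_prod_type' (f := fun (σ : Perm ι) i =>
      ((sign σ : ℤ) : R) * G (σ i) (Function.update σ i a)),
    ← sum_filter_add_sum_filter_not _ (fun x : Perm ι × ι => x.1 x.2 = a),
    sum_sign_mul_update_of_apply_ne, add_zero, sum_filter, Fintype.sum_prod_type]
  refine sum_congr rfl fun σ _ => ?_
  have h_update : Function.update σ (σ.symm a) a = σ := by simp
  simp [← eq_symm_apply, h_update]

variable [Fintype κ]

lemma card_perm_comp_eq_self {s : κ → ι} (hs : s.Injective) :
    #{σ : Perm ι | σ ∘ s = s} = (Fintype.card ι - Fintype.card κ).factorial := by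
  have e : {σ : Perm ι // σ ∘ s = s} ≃ Perm {i // i ∉ Set.range s} :=
    (subtypeEquivRight fun σ => by simp [funext_iff]).trans
      (Perm.subtypeEquivSubtypePerm (· ∉ Set.range s)).symm
  rw [← Fintype.card_subtype, Fintype.card_congr e, Fintype.card_perm, Fintype.card_subtype_compl,
    ← Set.card_range_of_injective hs]

lemma card_perm_comp_eq {s v : κ → ι} (hs : s.Injective) (hv : v.Injective) :
    #{σ : Perm ι | σ ∘ s = v} = (Fintype.card ι - Fintype.card κ).factorial := by
  obtain ⟨τ, rfl⟩ := exists_perm_comp_eq hs hv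
  rw [← card_perm_comp_eq_self hs]
  refine (card_equiv (Equiv.mulLeft τ) fun σ => ?_).symm
  simp [Function.comp_assoc, τ.injective.comp_left.eq_iff]

lemma sum_perm_comp_eq_factorial_mul_sum [DecidableEq κ] {A : Type*} [Semiring A] {s : κ → ι}
    (hs : s.Injective) {g : (κ → ι) → A} (hg : ∀ v, ¬ v.Injective → g v = 0) :
    ∑ σ : Perm ι, g (σ ∘ s) = (Fintype.card ι - Fintype.card κ).factorial * ∑ v, g v := by
  rw [← sum_fiberwise (g := fun σ : Perm ι => σ ∘ s), mul_sum]
  refine sum_congr rfl fun v _ => ?_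
  by_cases hv : v.Injective
  · rw [sum_congr rfl fun σ hσ => congrArg g (mem_filter.1 hσ).2,
      sum_const, card_perm_comp_eq hs hv, nsmul_eq_mul]
  · rw [hg v hv, mul_zero]
    exact sum_eq_zero fun σ hσ => by rw [(mem_filter.1 hσ).2, hg v hv]

end PermutationSums

lemma sum_pi_fin_succ {n : ℕ} {α M : Type*} [Fintype α] [AddCommMonoid M]
    (F : (Fin (n + 1) → α) → M) :
    ∑ v, F v = ∑ a, ∑ w : Fin n → α, F (Matrix.vecCons a w) := by
  rw [← (Fin.consEquiv fun _ => α).sum_comp, Fintype.sum_prod_type]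
  rfl

lemma sum_pi_fin_four {α M : Type*} [Fintype α] [AddCommMonoid M] (F : α → α → α → α → M) :
    ∑ v : Fin 4 → α, F (v 0) (v 1) (v 2) (v 3) = ∑ i, ∑ j, ∑ k, ∑ l, F i j k l := by
  simp [sum_pi_fin_succ]

lemma sum_sum_mul_eq_zero_of_symm_of_antisymm {ι R : Type*} [Fintype ι] [Ring R]
    [IsAddTorsionFree R] {f g : ι → ι → R} (hf : ∀ i j, f j i = f i j)
    (hg : ∀ i j, g j i = -g i j) : ∑ i, ∑ j, f i j * g i j = 0 := by
  rw [← self_eq_neg]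
  calc ∑ i, ∑ j, f i j * g i j = ∑ j, ∑ i, f i j * g i j := sum_comm
    _ = -∑ j, ∑ i, f j i * g j i := by
      simp only [← sum_neg_distrib, ← mul_neg, ← hg, hf]

/-! ### Alternating tensors -/

section AlternatingTensors

variable {n : ℕ} {α R : Type*} [Ring R]

lemma exists_strictMono_comp_perm [LinearOrder α] {v : Fin n → α} (hv : v.Injective) :
    ∃ σ : Perm (Fin n), StrictMono (v ∘ σ) :=
  ⟨Tuple.sort v,
    (Tuple.monotone_sort v).strictMono_of_injective (hv.comp (Tuple.sort v).injective)⟩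

/-- An array of rank `n`, encoded as a function of the tuple of its indices, is totally
antisymmetric: permuting the indices multiplies it by the sign of the permutation. -/
def IsAlternatingTensor (f : (Fin n → α) → R) : Prop :=
  ∀ (v : Fin n → α) (σ : Perm (Fin n)), f (v ∘ σ) = ((sign σ : ℤ) : R) * f v

namespace IsAlternatingTensor

variable {f : (Fin n → α) → R}

lemma of_swap_castSucc_succ {f : (Fin (n + 1) → α) → R}
    (hf : ∀ (i : Fin n) v, f (v ∘ swap i.castSucc i.succ) = -f v) : IsAlternatingTensor f := by
  intro v σ
  have hσ : σ ∈ Submonoid.closure (Set.range fun i : Fin n => swap i.castSucc i.succ) := by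
    rw [mclosure_swap_castSucc_succ]
    trivial
  induction hσ using Submonoid.closure_induction generalizing v with
  | mem _ h =>
    obtain ⟨i, rfl⟩ := h
    simp [hf, sign_swap i.castSucc_lt_succ.ne]
  | one => simp
  | mul σ τ _ _ hσ hτ =>
    rw [Perm.coe_mul, ← Function.comp_assoc, hτ, hσ, Perm.sign_mul, mul_comm (sign σ),
      Units.val_mul, Int.cast_mul, mul_assoc]

lemma eq_zero_of_not_injective [IsAddTorsionFree R] (hf : IsAlternatingTensor f) {v : Fin n → α}
    (hv : ¬ v.Injective) : f v = 0 := by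
  obtain ⟨i, j, h, hij⟩ := Function.not_injective_iff.1 hv
  have h_comp : v ∘ swap i j = v := by
    funext k
    rw [Function.comp_apply, swap_apply_def]
    split_ifs with hi hj <;> simp [*]
  rw [← self_eq_neg]
  simpa [h_comp, sign_swap hij] using hf v (swap i j)

open scoped Classical in
lemma sum_sign_mul_ite_strictMono [LinearOrder α] [IsAddTorsionFree R]
    (hf : IsAlternatingTensor f) (v : Fin n → α) :
    ∑ σ : Perm (Fin n), ((sign σ : ℤ) : R) * (if StrictMono (v ∘ σ) then f (v ∘ σ) else 0) =
      f v := by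
  by_cases hv : v.Injective
  · obtain ⟨τ, h_sort⟩ := exists_strictMono_comp_perm hv
    rw [sum_eq_single τ, if_pos h_sort, hf, ← mul_assoc]
    · rcases Int.units_eq_one_or (sign τ) with h | h <;> simp [h]
    · intro σ _ hσ
      rw [if_neg, mul_zero]
      refine fun h => hσ (Equiv.ext fun i => hv ?_)
      exact congrFun (Tuple.unique_monotone h.monotone h_sort.monotone) i
    · simp
  · simp [hf v, hf.eq_zero_of_not_injective hv]

end IsAlternatingTensor

-- Sorting the two blocks separately leaves only the shuffles to be checked.
lemma sign_mul_eq_of_strictMono {m n : ℕ} {κ : Type*} [Fintype κ] [LinearOrder κ]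
    {s : Fin m ↪ κ} {t : Fin n ↪ κ} (hst : ∀ x y, s x ≠ t y)
    {f : (Fin m → κ) → R} {g : (Fin n → κ) → R}
    (hf : IsAlternatingTensor f) (hg : IsAlternatingTensor g)
    (h : ∀ σ : Perm κ, StrictMono (σ ∘ s) → StrictMono (σ ∘ t) →
      ((sign σ : ℤ) : R) * f (σ ∘ s) = g (σ ∘ t)) (σ : Perm κ) :
    ((sign σ : ℤ) : R) * f (σ ∘ s) = g (σ ∘ t) := by
  obtain ⟨τ, hτ⟩ := exists_strictMono_comp_perm (σ.injective.comp s.injective)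
  obtain ⟨ρ, hρ⟩ := exists_strictMono_comp_perm (σ.injective.comp t.injective)
  set σ' := σ * τ.viaFintypeEmbedding s * ρ.viaFintypeEmbedding t with hσ'
  have hs : σ' ∘ s = (σ ∘ s) ∘ τ := by
    funext x
    have hx : s x ∉ Set.range t := fun ⟨y, hy⟩ => hst x y hy.symm
    simp [hσ', viaFintypeEmbedding_apply_notMem_range _ _ hx]
  have ht : σ' ∘ t = (σ ∘ t) ∘ ρ := by
    funext y
    have hy : t (ρ y) ∉ Set.range s := fun ⟨x, hx⟩ => hst x (ρ y) hx
    simp [hσ', viaFintypeEmbedding_apply_notMem_range _ _ hy]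
  have h_sorted := h σ' (hs ▸ hτ) (ht ▸ hρ)
  rw [hs, ht, hf, hg, hσ', Perm.sign_mul, Perm.sign_mul, viaFintypeEmbedding_sign,
    viaFintypeEmbedding_sign] at h_sorted
  rcases Int.units_eq_one_or (sign τ) with h₁ | h₁ <;>
    rcases Int.units_eq_one_or (sign ρ) with h₂ | h₂ <;> simpa [h₁, h₂] using h_sorted

lemma isAlternatingTensor_three_iff {η : α → α → α → R} :
    IsAlternatingTensor (fun v : Fin 3 → α => η (v 0) (v 1) (v 2)) ↔
      (∀ i j k, η j i k = -η i j k) ∧ ∀ i j k, η i k j = -η i j k := by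
  refine ⟨fun h => ⟨fun i j k => ?_, fun i j k => ?_⟩,
    fun h => .of_swap_castSucc_succ fun i v => ?_⟩
  · simpa [sign_swap, swap_apply_of_ne_of_ne] using h ![i, j, k] (swap 0 1)
  · simpa [sign_swap, swap_apply_of_ne_of_ne] using h ![i, j, k] (swap 1 2)
  · fin_cases i
    · exact h.1 _ _ _
    · exact h.2 _ _ _

lemma isAlternatingTensor_four_iff {η : α → α → α → α → R} :
    IsAlternatingTensor (fun v : Fin 4 → α => η (v 0) (v 1) (v 2) (v 3)) ↔
      (∀ i j k l, η j i k l = -η i j k l) ∧ (∀ i j k l, η i k j l = -η i j k l) ∧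
        ∀ i j k l, η i j l k = -η i j k l := by
  refine ⟨fun h => ⟨fun i j k l => ?_, fun i j k l => ?_, fun i j k l => ?_⟩,
    fun h => .of_swap_castSucc_succ fun i v => ?_⟩
  · simpa [sign_swap, swap_apply_of_ne_of_ne] using h ![i, j, k, l] (swap 0 1)
  · simpa [sign_swap, swap_apply_of_ne_of_ne] using h ![i, j, k, l] (swap 1 2)
  · simpa [sign_swap, swap_apply_of_ne_of_ne] using h ![i, j, k, l] (swap 2 3)
  · fin_cases i
    · exact h.1 _ _ _ _
    · exact h.2.1 _ _ _ _
    · exact h.2.2 _ _ _ _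

end AlternatingTensors

lemma three_mul_sum_sign_mul_contract {R : Type*} [CommRing R]
    {α β η : Fin 7 → Fin 7 → Fin 7 → R}
    (hα : IsAlternatingTensor fun v : Fin 3 → Fin 7 => α (v 0) (v 1) (v 2))
    (hβ : IsAlternatingTensor fun v : Fin 3 → Fin 7 => β (v 0) (v 1) (v 2))
    (hη : IsAlternatingTensor fun v : Fin 3 → Fin 7 => η (v 0) (v 1) (v 2)) (a b : Fin 7) :
    3 * ∑ σ : Perm (Fin 7), ((sign σ : ℤ) : R) *
        (α a (σ 0) (σ 1) * β b (σ 2) (σ 3) * η (σ 4) (σ 5) (σ 6)) =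
      2 * ∑ σ : Perm (Fin 7), ((sign σ : ℤ) : R) *
        (α (σ 0) (σ 1) (σ 2) * (β b a (σ 3) * η (σ 4) (σ 5) (σ 6))) +
      3 * ∑ σ : Perm (Fin 7), ((sign σ : ℤ) : R) *
        (α (σ 0) (σ 1) (σ 2) * (β b (σ 3) (σ 4) * η a (σ 5) (σ 6))) := by
  rw [isAlternatingTensor_three_iff] at hα hβ hη
  let G (c : Fin 7) (v : Fin 7 → Fin 7) : R :=
    α c (v 0) (v 1) * β b (v 2) (v 3) * η (v 4) (v 5) (v 6)
  let Fβ (v : Fin 7 → Fin 7) : R := α (v 0) (v 1) (v 2) * (β b a (v 3) * η (v 4) (v 5) (v 6))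
  let Fη (v : Fin 7 → Fin 7) : R := α (v 0) (v 1) (v 2) * (β b (v 3) (v 4) * η a (v 5) (v 6))
  have hα_rotate (i j k : Fin 7) : α k i j = α i j k := by rw [hα.1 i k, hα.2 i j k, neg_neg]
  have h_slot₀ (σ : Perm (Fin 7)) : G (σ 0) (Function.update σ 0 a) = -G a σ := by
    simp [G, hα.1 a (σ 0)]
  have h_slot₁ (σ : Perm (Fin 7)) : G (σ 1) (Function.update σ 1 a) = -G a σ := by
    simp [G, hα_rotate (σ 0) a, hα.1 a (σ 0)]
  have h_slot₂ (σ : Perm (Fin 7)) : G (σ 2) (Function.update σ 2 a) = Fβ σ := by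
    simp [G, Fβ, hα_rotate, mul_assoc]
  have h_slot₃ (σ : Perm (Fin 7)) : G (σ 3) (Function.update σ 3 a) = -Fβ (σ ∘ swap 2 3) := by
    simp [G, Fβ, hα_rotate, hβ.2 b a, mul_assoc, swap_apply_of_ne_of_ne]
  have h_slot₄ (σ : Perm (Fin 7)) : G (σ 4) (Function.update σ 4 a) =
      Fη (σ ∘ (swap 2 4 * swap 3 4 : Perm (Fin 7))) := by
    simp [G, Fη, hα_rotate, mul_assoc, swap_apply_of_ne_of_ne]
  have h_slot₅ (σ : Perm (Fin 7)) : G (σ 5) (Function.update σ 5 a) =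
      -Fη (σ ∘ (swap 2 5 * swap 3 5 * swap 4 5 : Perm (Fin 7))) := by
    simp [G, Fη, hα_rotate, hη.1 a, mul_assoc, swap_apply_of_ne_of_ne]
  have h_slot₆ (σ : Perm (Fin 7)) : G (σ 6) (Function.update σ 6 a) =
      Fη (σ ∘ (swap 2 6 * swap 3 6 * swap 4 6 * swap 5 6 : Perm (Fin 7))) := by
    simp [G, Fη, hα_rotate, hη.2 (σ 4) a, hη.1 a, mul_assoc, swap_apply_of_ne_of_ne]
  have h_sum := sum_sign_mul_eq_sum_update G a
  simp only [Fin.sum_univ_seven, h_slot₀, h_slot₁, h_slot₂, h_slot₃, h_slot₄, h_slot₅, h_slot₆,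
    mul_neg, sum_neg_distrib, sum_sign_mul_comp_perm] at h_sum
  simp only [Perm.sign_mul, sign_swap', Fin.reduceEq, ↓reduceIte, Units.val_neg, Units.val_one,
    Int.cast_neg, Int.cast_one, mul_neg, mul_one, neg_neg] at h_sum
  linear_combination h_sum

/-! ### The components of `φ` and `ψ` as integers -/

/-- The cross product table of the G₂-structure: `crossTable i j = ±(k + 1)` encodes
`eᵢ × eⱼ = ±eₖ`, and `crossTable i j = 0` encodes `eᵢ × eⱼ = 0`. -/
def crossTable : Fin 7 → Fin 7 → ℤ :=
  ![![0, -3, 2, -5, 4, -7, 6],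
    ![3, 0, -1, -6, 7, 4, -5],
    ![-2, 1, 0, 7, 6, -5, -4],
    ![5, 6, -7, 0, -1, -2, 3],
    ![-4, -7, -6, 1, 0, 3, 2],
    ![7, -4, 5, 2, -3, 0, -1],
    ![-6, 5, 4, -3, -2, 1, 0]]

/-- The components `φᵢⱼₖ = ⟨eᵢ × eⱼ, eₖ⟩` as integers. -/
def phiInt (i j k : Fin 7) : ℤ :=
  if crossTable i j = k + 1 then 1 else if crossTable i j = -(k + 1) then -1 else 0

/-- The components of `ψ` as integers, encoded as the defect of the cross product from satisfying
`⟨u × v, w × z⟩ = ⟨u, w⟩⟨v, z⟩ - ⟨u, z⟩⟨v, w⟩`. -/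
def psiInt (i j k l : Fin 7) : ℤ :=
  (if i = k ∧ j = l then 1 else 0) - (if i = l ∧ j = k then 1 else 0) -
    ∑ m, phiInt i j m * phiInt k l m

lemma phiInt_swap_left : ∀ i j k, phiInt j i k = -phiInt i j k := by decide +kernel

lemma phiInt_swap_right : ∀ i j k, phiInt i k j = -phiInt i j k := by decide +kernel

lemma psiInt_swap_left (i j k l : Fin 7) : psiInt j i k l = -psiInt i j k l := by
  simp only [psiInt, phiInt_swap_left i j, neg_mul, sum_neg_distrib, and_comm]
  ring

lemma psiInt_swap_middle : ∀ i j k l, psiInt i k j l = -psiInt i j k l := by decide +kernel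

lemma psiInt_swap_right (i j k l : Fin 7) : psiInt i j l k = -psiInt i j k l := by
  simp only [psiInt, phiInt_swap_left k l, mul_neg, sum_neg_distrib]
  ring

lemma isAlternatingTensor_phiInt :
    IsAlternatingTensor fun v : Fin 3 → Fin 7 => phiInt (v 0) (v 1) (v 2) :=
  isAlternatingTensor_three_iff.2 ⟨phiInt_swap_left, phiInt_swap_right⟩

lemma isAlternatingTensor_psiInt :
    IsAlternatingTensor fun v : Fin 4 → Fin 7 => psiInt (v 0) (v 1) (v 2) (v 3) :=
  isAlternatingTensor_four_iff.2 ⟨psiInt_swap_left, psiInt_swap_middle, psiInt_swap_right⟩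

lemma phi0_eq_ite (i j k : Fin 7) :
    phi0 i j k = if i < j ∧ j < k then (phiInt i j k : ℝ) else 0 := by
  unfold phi0
  norm_cast
  revert i j k
  decide +kernel

lemma psi0_eq_ite (i j k l : Fin 7) :
    psi0 i j k l = if i < j ∧ j < k ∧ k < l then (psiInt i j k l : ℝ) else 0 := by
  unfold psi0
  norm_cast
  revert i j k l
  decide +kernel

lemma phi_eq_intCast (i j k : Fin 7) : phi i j k = phiInt i j k := by
  have h := isAlternatingTensor_phiInt.sum_sign_mul_ite_strictMono ![i, j, k]
  simp only [Fin.strictMono_iff_lt_succ, Fin.forall_fin_two] at h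
  simp only [phi, phi0_eq_ite]
  exact_mod_cast h

lemma psi_eq_intCast (i j k l : Fin 7) : psi i j k l = psiInt i j k l := by
  have h := isAlternatingTensor_psiInt.sum_sign_mul_ite_strictMono ![i, j, k, l]
  simp only [Fin.strictMono_iff_lt_succ, Fin.forall_fin_succ, IsEmpty.forall_iff, and_true] at h
  simp only [psi, psi0_eq_ite]
  exact_mod_cast h

lemma prod_ite_lt_mul_phiInt :
    ∀ p q, p < q → ∀ r, q < r → ∀ i j, i < j → ∀ k, j < k → ∀ l, k < l →
      Function.Injective ![p, q, r, i, j, k, l] →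
      ((∏ x, ∏ y ∈ Ioi x,
        if ![p, q, r, i, j, k, l] x < ![p, q, r, i, j, k, l] y then 1 else -1 : ℤˣ) : ℤ) *
          phiInt p q r = psiInt i j k l := by
  decide +kernel

lemma sign_mul_phiInt_of_strictMono (σ : Perm (Fin 7))
    (h₁ : StrictMono (σ ∘ ![0, 1, 2])) (h₂ : StrictMono (σ ∘ ![3, 4, 5, 6])) :
    (sign σ : ℤ) * phiInt (σ 0) (σ 1) (σ 2) = psiInt (σ 3) (σ 4) (σ 5) (σ 6) := by
  have h_list : ![σ 0, σ 1, σ 2, σ 3, σ 4, σ 5, σ 6] = σ := by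
    funext x
    fin_cases x <;> rfl
  have h := prod_ite_lt_mul_phiInt (σ 0) (σ 1) (@h₁ 0 1 (by decide)) (σ 2) (@h₁ 1 2 (by decide))
    (σ 3) (σ 4) (@h₂ 0 1 (by decide)) (σ 5) (@h₂ 1 2 (by decide)) (σ 6) (@h₂ 2 3 (by decide))
  rw [h_list] at h
  rw [sign_eq_prod_prod_Ioi]
  exact h σ.injective

-- This is `ψ = ∗φ` in components.
lemma sign_mul_phiInt (σ : Perm (Fin 7)) :
    (sign σ : ℤ) * phiInt (σ 0) (σ 1) (σ 2) = psiInt (σ 3) (σ 4) (σ 5) (σ 6) :=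
  sign_mul_eq_of_strictMono (s := ⟨![0, 1, 2], by decide⟩) (t := ⟨![3, 4, 5, 6], by decide⟩)
    (by decide) isAlternatingTensor_phiInt isAlternatingTensor_psiInt
    sign_mul_phiInt_of_strictMono σ

/-! ### Contraction identities -/

lemma isAlternatingTensor_phi :
    IsAlternatingTensor fun v : Fin 3 → Fin 7 => phi (v 0) (v 1) (v 2) :=
  fun v σ => by simpa only [phi_eq_intCast] using mod_cast isAlternatingTensor_phiInt v σ

lemma isAlternatingTensor_psi :
    IsAlternatingTensor fun v : Fin 4 → Fin 7 => psi (v 0) (v 1) (v 2) (v 3) :=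
  fun v σ => by simpa only [psi_eq_intCast] using mod_cast isAlternatingTensor_psiInt v σ

lemma phi_swap_left (i j k : Fin 7) : phi j i k = -phi i j k :=
  (isAlternatingTensor_three_iff.1 isAlternatingTensor_phi).1 i j k

lemma phi_swap_right (i j k : Fin 7) : phi i k j = -phi i j k :=
  (isAlternatingTensor_three_iff.1 isAlternatingTensor_phi).2 i j k

lemma phi_rotate (i j k : Fin 7) : phi j k i = phi i j k := by
  rw [phi_swap_right j i k, phi_swap_left i j k, neg_neg]

lemma psi_swap_left (i j k l : Fin 7) : psi j i k l = -psi i j k l :=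
  (isAlternatingTensor_four_iff.1 isAlternatingTensor_psi).1 i j k l

lemma psi_swap_middle (i j k l : Fin 7) : psi i k j l = -psi i j k l :=
  (isAlternatingTensor_four_iff.1 isAlternatingTensor_psi).2.1 i j k l

lemma psi_swap_right (i j k l : Fin 7) : psi i j l k = -psi i j k l :=
  (isAlternatingTensor_four_iff.1 isAlternatingTensor_psi).2.2 i j k l

lemma psi_pairs_comm (i j k l : Fin 7) : psi k l i j = psi i j k l := by
  rw [psi_swap_middle k i l j, psi_swap_left i k l j, psi_swap_right i k j l,
    psi_swap_middle i j k l]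
  ring

lemma kdelta_comm (i j : Fin 7) : kdelta i j = kdelta j i := by simp [kdelta, eq_comm]

lemma sum_kdelta_mul (i : Fin 7) (f : Fin 7 → ℝ) : ∑ j, kdelta i j * f j = f i := by
  simp [kdelta]

lemma sum_mul_kdelta (i : Fin 7) (f : Fin 7 → ℝ) : ∑ j, f j * kdelta i j = f i := by
  simp [kdelta]

lemma sum_kdelta_self : ∑ i, kdelta i i = 7 := by simp [kdelta]

lemma sum_phi_mul_phi (i j k l : Fin 7) :
    ∑ m, phi i j m * phi k l m =
      kdelta i k * kdelta j l - kdelta i l * kdelta j k - psi i j k l := by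
  simp only [phi_eq_intCast, psi_eq_intCast, psiInt, kdelta, ite_zero_mul_ite_zero, mul_one]
  push_cast
  ring

lemma psi_self_middle (i j k : Fin 7) : psi i j k j = 0 := by
  linarith [psi_swap_right i j k j, psi_swap_middle i k j j, psi_swap_right i k j j]

lemma sum_sum_phi_mul_phi (i j : Fin 7) :
    ∑ k, ∑ l, phi i k l * phi j k l = 6 * kdelta i j := by
  simp only [sum_phi_mul_phi, psi_self_middle, sum_sub_distrib, ← mul_sum,
    sum_kdelta_self, sum_kdelta_mul, sub_zero, kdelta_comm _ j]
  ring

lemma sum_sum_mul_psi (F : Fin 7 → Fin 7 → ℝ) (k l : Fin 7) :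
    ∑ i, ∑ j, F i j * psi i j k l =
      F k l - F l k - ∑ m, (∑ i, ∑ j, F i j * phi m i j) * phi k l m := by
  have h_psi (i j : Fin 7) : F i j * psi i j k l =
      kdelta k i * (kdelta l j * F i j) - kdelta l i * (kdelta k j * F i j) -
        ∑ m, F i j * phi m i j * phi k l m := by
    simp only [mul_assoc, ← mul_sum, ← phi_rotate _ i j, sum_phi_mul_phi,
      kdelta_comm _ k, kdelta_comm _ l]
    ring
  simp only [h_psi, sum_sub_distrib, ← mul_sum, sum_kdelta_mul, sum_mul]
  rw [sum_comm_cycle]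

lemma sum_sum_phi_mul_psi (i k l : Fin 7) :
    ∑ s, ∑ t, phi i s t * psi s t k l = -4 * phi i k l := by
  have h_trace : ∑ m, (∑ s, ∑ t, phi i s t * phi m s t) * phi k l m = 6 * phi i k l := by
    simp only [sum_sum_phi_mul_phi, mul_assoc, ← mul_sum, sum_kdelta_mul, phi_rotate i k l]
  rw [sum_sum_mul_psi, h_trace, phi_swap_right i k l]
  ring

lemma sum_sum_psi_mul_psi (i j k l : Fin 7) :
    ∑ s, ∑ t, psi i j s t * psi k l s t =
      4 * (kdelta i k * kdelta j l - kdelta i l * kdelta j k) - 2 * psi i j k l := by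
  have h_phi (m : Fin 7) : ∑ s, ∑ t, psi i j s t * phi m s t = -4 * phi i j m := by
    rw [← phi_rotate, ← phi_rotate, ← sum_sum_phi_mul_psi]
    simp only [psi_pairs_comm _ _ i j, mul_comm]
  simp only [← psi_pairs_comm k l]
  rw [sum_sum_mul_psi, psi_swap_right i j k l]
  simp only [h_phi, mul_assoc, ← mul_sum, sum_phi_mul_phi]
  ring

lemma sum_sum_sum_psi_mul_psi (m n : Fin 7) :
    ∑ i, ∑ j, ∑ k, psi m i j k * psi n i j k = 24 * kdelta m n := by
  simp only [sum_sum_psi_mul_psi, psi_self_middle, sum_sub_distrib, ← mul_sum,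
    sum_kdelta_self, sum_kdelta_mul, kdelta_comm _ n]
  ring

lemma sum_sign_mul_phi_mul (T : Fin 7 → Fin 7 → Fin 7 → Fin 7 → ℝ) :
    ∑ σ : Perm (Fin 7), ((sign σ : ℤ) : ℝ) *
        (phi (σ 0) (σ 1) (σ 2) * T (σ 3) (σ 4) (σ 5) (σ 6)) =
      6 * ∑ i, ∑ j, ∑ k, ∑ l, psi i j k l * T i j k l := by
  have h_count := sum_perm_comp_eq_factorial_mul_sum (ι := Fin 7) (s := ![3, 4, 5, 6]) (by decide)
    (g := fun v => psi (v 0) (v 1) (v 2) (v 3) * T (v 0) (v 1) (v 2) (v 3))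
    fun v hv => by rw [isAlternatingTensor_psi.eq_zero_of_not_injective hv, zero_mul]
  have h_hodge (σ : Perm (Fin 7)) : ((sign σ : ℤ) : ℝ) * phi (σ 0) (σ 1) (σ 2) =
      psi (σ 3) (σ 4) (σ 5) (σ 6) := by
    rw [phi_eq_intCast, psi_eq_intCast]
    exact_mod_cast sign_mul_phiInt σ
  rw [sum_pi_fin_four fun i j k l => psi i j k l * T i j k l] at h_count
  simpa [← mul_assoc, h_hodge, Nat.factorial] using h_count

/-! ### The maps `i` and `j` -/

/-- The map `j` from 3-forms to symmetric 2-tensors, `j(η)(u, v) = ∗((u⌟φ) ∧ (v⌟φ) ∧ η)`, with the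
wedge product written as a sum over permutations. -/
noncomputable def jMap (η : Fin 7 → Fin 7 → Fin 7 → ℝ) (a b : Fin 7) : ℝ :=
  (1/24) * ∑ σ : Perm (Fin 7), ((sign σ : ℤ) : ℝ) *
    (phi a (σ 0) (σ 1) * phi b (σ 2) (σ 3) * η (σ 4) (σ 5) (σ 6))

/-- The map `i` from symmetric 2-tensors to 3-forms, the infinitesimal action of `h` on `φ`. -/
noncomputable def iMap (h : Fin 7 → Fin 7 → ℝ) (i j k : Fin 7) : ℝ :=
  ∑ l, (h i l * phi l j k + h j l * phi i l k + h k l * phi i j l)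

/-- The interior product `X⌟ψ`. -/
noncomputable def contractPsi (X : Fin 7 → ℝ) (i j k : Fin 7) : ℝ :=
  ∑ n, X n * psi n i j k

lemma isAlternatingTensor_iMap (h : Fin 7 → Fin 7 → ℝ) :
    IsAlternatingTensor fun v : Fin 3 → Fin 7 => iMap h (v 0) (v 1) (v 2) := by
  refine isAlternatingTensor_three_iff.2 ⟨fun i j k => ?_, fun i j k => ?_⟩
  · simp only [iMap, ← sum_neg_distrib, phi_swap_left i, phi_swap_left _ j]
    exact sum_congr rfl fun l _ => by ring
  · simp only [iMap, ← sum_neg_distrib, phi_swap_right _ j, phi_swap_right _ _ k]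
    exact sum_congr rfl fun l _ => by ring

lemma isAlternatingTensor_contractPsi (X : Fin 7 → ℝ) :
    IsAlternatingTensor fun v : Fin 3 → Fin 7 => contractPsi X (v 0) (v 1) (v 2) := by
  refine isAlternatingTensor_three_iff.2 ⟨fun i j k => ?_, fun i j k => ?_⟩
  · simp [contractPsi, psi_swap_middle _ i j]
  · simp [contractPsi, psi_swap_right _ _ j k]

lemma jMap_add (η ζ : Fin 7 → Fin 7 → Fin 7 → ℝ) : jMap (η + ζ) = jMap η + jMap ζ := by
  funext a b
  simp only [jMap, Pi.add_apply, mul_add, sum_add_distrib]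

lemma jMap_eq_of_isAlternatingTensor {η : Fin 7 → Fin 7 → Fin 7 → ℝ}
    (hη : IsAlternatingTensor fun v : Fin 3 → Fin 7 => η (v 0) (v 1) (v 2)) (a b : Fin 7) :
    jMap η a b = (1/6) * ∑ m, phi b a m * ∑ i, ∑ j, ∑ k, psi m i j k * η i j k -
      ∑ i, ∑ j, phi b i j * η a i j := by
  have h_skew :=
    three_mul_sum_sign_mul_contract isAlternatingTensor_phi isAlternatingTensor_phi hη a b
  rw [sum_sign_mul_phi_mul fun m i j k => phi b a m * η i j k,
    sum_sign_mul_phi_mul fun s t i j => phi b s t * η a i j] at h_skew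
  have h_psi : ∑ m, ∑ i, ∑ j, ∑ k, psi m i j k * (phi b a m * η i j k) =
      ∑ m, phi b a m * ∑ i, ∑ j, ∑ k, psi m i j k * η i j k := by
    simp only [mul_sum, mul_left_comm]
  have h_phi : ∑ s, ∑ t, ∑ i, ∑ j, psi s t i j * (phi b s t * η a i j) =
      -4 * ∑ i, ∑ j, phi b i j * η a i j := by
    rw [sum_comm_cycle, mul_sum]
    refine sum_congr rfl fun i _ => ?_
    rw [sum_comm_cycle, mul_sum]
    refine sum_congr rfl fun j _ => ?_
    rw [← mul_assoc, ← sum_sum_phi_mul_psi]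
    simp only [sum_mul, mul_assoc, mul_left_comm]
  rw [h_psi, h_phi] at h_skew
  unfold jMap
  linear_combination h_skew / 72

lemma sum_sum_phi_mul_iMap {h : Fin 7 → Fin 7 → ℝ} (hsymm : ∀ i j, h j i = h i j) (a b : Fin 7) :
    ∑ i, ∑ j, phi b i j * iMap h a i j = 2 * (∑ i, h i i) * kdelta a b + 4 * h a b := by
  have h_first : ∑ i, ∑ j, phi b i j * ∑ l, h a l * phi l i j = 6 * h a b := by
    simp only [mul_sum, mul_left_comm (phi b _ _)]
    rw [sum_comm_cycle]
    simp only [← mul_sum, sum_sum_phi_mul_phi, mul_left_comm _ (6 : ℝ), sum_mul_kdelta]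
  have h_skew : ∑ i, ∑ l, h i l * psi b i a l = 0 :=
    sum_sum_mul_eq_zero_of_symm_of_antisymm hsymm fun i l => by
      rw [psi_swap_middle b a l i, psi_swap_right b a i l, psi_swap_middle b i a l, neg_neg]
  have h_second : ∑ i, ∑ j, phi b i j * ∑ l, h i l * phi a l j =
      (∑ i, h i i) * kdelta a b - h a b := by
    calc ∑ i, ∑ j, phi b i j * ∑ l, h i l * phi a l j
        = ∑ i, ∑ l, h i l * ∑ j, phi b i j * phi a l j := by
          simp only [mul_sum, mul_left_comm (phi b _ _)]
          exact sum_congr rfl fun i _ => sum_comm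
      _ = (∑ i, h i i) * kdelta a b - h a b := by
          simp only [sum_phi_mul_phi, mul_sub, sum_sub_distrib, h_skew, ← mul_assoc,
            mul_right_comm _ (kdelta b _), sum_mul_kdelta, ← sum_mul, kdelta_comm _ a,
            sub_zero]
  have h_third : ∑ i, ∑ j, phi b i j * ∑ l, h j l * phi a i l =
      (∑ i, h i i) * kdelta a b - h a b := by
    rw [← h_second, sum_comm]
    refine sum_congr rfl fun i _ => sum_congr rfl fun j _ => ?_
    simp only [phi_swap_right b i j, phi_swap_right a _ j, mul_neg, neg_mul,
      sum_neg_distrib, neg_neg]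
  simp only [iMap, sum_add_distrib, mul_add, h_first, h_second, h_third]
  ring

lemma sum_sum_sum_psi_mul_iMap {h : Fin 7 → Fin 7 → ℝ} (hsymm : ∀ i j, h j i = h i j)
    (m : Fin 7) : ∑ i, ∑ j, ∑ k, psi m i j k * iMap h i j k = 0 := by
  have h_first : ∑ i, ∑ j, ∑ k, psi m i j k * ∑ l, h i l * phi l j k = 0 := by
    calc ∑ i, ∑ j, ∑ k, psi m i j k * ∑ l, h i l * phi l j k
        = ∑ i, ∑ l, h i l * ∑ j, ∑ k, phi l j k * psi j k m i := by
          simp only [mul_sum, mul_left_comm (psi _ _ _ _), psi_pairs_comm m,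
            mul_comm (phi _ _ _)]
          exact sum_congr rfl fun i _ => sum_comm_cycle
      _ = 0 := by
          simp only [sum_sum_phi_mul_psi]
          refine sum_sum_mul_eq_zero_of_symm_of_antisymm hsymm fun i l => ?_
          rw [phi_swap_right, ← phi_rotate i l m, phi_swap_right]
          ring
  have h_second : ∑ i, ∑ j, ∑ k, psi m i j k * ∑ l, h j l * phi i l k = 0 := by
    rw [sum_comm, ← h_first]
    refine sum_congr rfl fun j _ => sum_congr rfl fun i _ => ?_
    simp only [psi_swap_middle m j i, phi_swap_left _ i, mul_neg, neg_mul,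
      sum_neg_distrib, neg_neg]
  have h_third : ∑ i, ∑ j, ∑ k, psi m i j k * ∑ l, h k l * phi i j l = 0 := by
    rw [sum_comm_cycle, ← h_first]
    refine sum_congr rfl fun k _ => sum_congr rfl fun i _ =>
      sum_congr rfl fun j _ => ?_
    simp only [psi_swap_right m i k j, psi_swap_middle m k i j, phi_rotate _ i j, neg_neg]
  simp only [iMap, sum_add_distrib, mul_add, h_first, h_second, h_third, add_zero]

lemma sum_sum_phi_mul_contractPsi (X : Fin 7 → ℝ) (a b : Fin 7) :
    ∑ i, ∑ j, phi b i j * contractPsi X a i j = 4 * ∑ n, phi b a n * X n := by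
  simp only [contractPsi, mul_sum]
  rw [sum_comm_cycle]
  refine sum_congr rfl fun n _ => ?_
  simp only [← psi_pairs_comm n a, mul_left_comm _ (X n), ← mul_sum, sum_sum_phi_mul_psi]
  rw [phi_swap_right b a n]
  ring

lemma sum_sum_sum_psi_mul_contractPsi (X : Fin 7 → ℝ) (m : Fin 7) :
    ∑ i, ∑ j, ∑ k, psi m i j k * contractPsi X i j k = 24 * X m := by
  calc ∑ i, ∑ j, ∑ k, psi m i j k * contractPsi X i j k
      = ∑ n, X n * ∑ i, ∑ j, ∑ k, psi m i j k * psi n i j k := by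
        simp only [contractPsi, mul_sum, mul_left_comm (X _)]
        exact (sum_congr rfl fun i _ => sum_comm_cycle).trans sum_comm
    _ = 24 * X m := by
        simp only [sum_sum_sum_psi_mul_psi, mul_left_comm _ (24 : ℝ), ← mul_sum,
          sum_mul_kdelta]

lemma jMap_iMap {h : Fin 7 → Fin 7 → ℝ} (hsymm : ∀ i j, h j i = h i j) (a b : Fin 7) :
    jMap (iMap h) a b = -2 * (∑ i, h i i) * kdelta a b - 4 * h a b := by
  simp only [jMap_eq_of_isAlternatingTensor (isAlternatingTensor_iMap h),
    sum_sum_sum_psi_mul_iMap hsymm, sum_sum_phi_mul_iMap hsymm, mul_zero, sum_const_zero]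
  ring

lemma jMap_contractPsi (X : Fin 7 → ℝ) (a b : Fin 7) : jMap (contractPsi X) a b = 0 := by
  simp only [jMap_eq_of_isAlternatingTensor (isAlternatingTensor_contractPsi X),
    sum_sum_sum_psi_mul_contractPsi, sum_sum_phi_mul_contractPsi, mul_left_comm _ (24 : ℝ),
    ← mul_sum]
  ring

/-- Proposition `threeformsisomorphismsprop`: for η = i(h) + X⌐ψ one has
j(η) = −2 tr(h) g − 4 h. -/
theorem j_map_formula (h : Fin 7 → Fin 7 → ℝ) (X : Fin 7 → ℝ)
    (hsymm : ∀ i j, h j i = h i j)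
    (η : Fin 7 → Fin 7 → Fin 7 → ℝ)
    (hη : ∀ i j k, η i j k =
      (∑ l, (h i l * phi l j k + h j l * phi i l k + h k l * phi i j l))
      + ∑ n, X n * psi n i j k) :
    ∀ a b : Fin 7,
      (1/24) * ∑ σ : Equiv.Perm (Fin 7),
        ((Equiv.Perm.sign σ : ℤ) : ℝ) *
          (phi a (σ 0) (σ 1) * phi b (σ 2) (σ 3) * η (σ 4) (σ 5) (σ 6))
        = -2 * (∑ i, h i i) * kdelta a b - 4 * h a b := by
  intro a b
  have h_decomp : η = iMap h + contractPsi X := by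
    funext i j k
    exact hη i j k
  calc jMap η a b = jMap (iMap h) a b + jMap (contractPsi X) a b := by
        rw [h_decomp, jMap_add, Pi.add_apply, Pi.add_apply]
    _ = -2 * (∑ i, h i i) * kdelta a b - 4 * h a b := by
        rw [jMap_iMap hsymm, jMap_contractPsi, add_zero]
end

section
/- Let R = (R_{ijkl}) be a real array indexed by quadruples of indices in {1,…,7} satisfying R_{ijkl} = −R_{jikl}, R_{ijkl} = −R_{ijlk}, and the first Bianchi identity R_{ijkl} + R_{iklj} + R_{iljk} = 0 for all indices. Define Q_{ijkl} = Σ_{a,b} R_{ijab} ψ_{abkl}. Then the contraction of Q over its first and last indices vanishes: Σ_i Q_{ijki} = 0 for all j,k. -/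
open Finset

/-! Moving `j` to the front slot by antisymmetry, the first Bianchi identity says that the cyclic
sum of `R i j a b` over `i, a, b` vanishes, whereas `ψ a b k i` is unchanged when `i, a, b` are
cyclically permuted, a 3-cycle being even. Averaging the contraction over the cyclic relabellings of
its three summation indices therefore gives zero. -/

section Antisymmetrization

variable {κ ι A : Type*} [Fintype κ] [DecidableEq κ] [Ring A]

/-- The signed sum of an array `f` over all permutations of its slots `κ`. There is no normalization
by `(card κ)!`, so that an array supported on strictly increasing indices is extended to the totally
antisymmetric array with the same components there. -/
def antisymmetrization (f : (κ → ι) → A) (v : κ → ι) : A :=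
  ∑ σ : Equiv.Perm κ, ((Equiv.Perm.sign σ : ℤ) : A) * f (v ∘ σ)

theorem antisymmetrization_comp_perm (f : (κ → ι) → A) (v : κ → ι) (τ : Equiv.Perm κ) :
    antisymmetrization f (v ∘ τ) = ((Equiv.Perm.sign τ : ℤ) : A) * antisymmetrization f v := by
  have sign_mul_sign_mul (σ : Equiv.Perm κ) :
      (Equiv.Perm.sign σ : ℤ) = Equiv.Perm.sign τ * Equiv.Perm.sign (τ * σ) := by
    rw [← Units.val_mul, Equiv.Perm.sign_mul, ← mul_assoc, Int.units_mul_self, one_mul]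
  simp only [antisymmetrization, mul_sum]
  refine Fintype.sum_equiv (Equiv.mulLeft τ) _ _ fun σ => ?_
  rw [sign_mul_sign_mul σ, Int.cast_mul, mul_assoc, Equiv.coe_mulLeft, Equiv.Perm.coe_mul,
    Function.comp_assoc]

end Antisymmetrization

theorem psi_eq_antisymmetrization (v : Fin 4 → Fin 7) :
    psi (v 0) (v 1) (v 2) (v 3) =
      antisymmetrization (fun w => psi0 (w 0) (w 1) (w 2) (w 3)) v := by
  have vec_eq : ![v 0, v 1, v 2, v 3] = v := FinVec.etaExpand_eq v
  simp only [psi, antisymmetrization, vec_eq, Function.comp_apply]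

theorem psi_comp_perm (v : Fin 4 → Fin 7) (τ : Equiv.Perm (Fin 4)) :
    psi (v (τ 0)) (v (τ 1)) (v (τ 2)) (v (τ 3)) =
      ((Equiv.Perm.sign τ : ℤ) : ℝ) * psi (v 0) (v 1) (v 2) (v 3) := by
  rw [psi_eq_antisymmetrization, ← antisymmetrization_comp_perm,
    ← psi_eq_antisymmetrization (v ∘ τ)]
  rfl

theorem psi_cyclic (a b k i : Fin 7) : psi b i k a = psi a b k i := by
  let τ : Equiv.Perm (Fin 4) := Equiv.swap 0 1 * Equiv.swap 1 3
  have sign_τ : Equiv.Perm.sign τ = 1 := by decide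
  calc psi b i k a = ((Equiv.Perm.sign τ : ℤ) : ℝ) * psi a b k i := psi_comp_perm ![a, b, k, i] τ
    _ = psi a b k i := by rw [sign_τ, Units.val_one, Int.cast_one, one_mul]

theorem sum_eq_zero_of_cyclic_sum_eq_zero {ι A : Type*} [Fintype ι] [AddCommMonoid A]
    [IsAddTorsionFree A] (f : ι → ι → ι → A)
    (hf : ∀ i j k, f i j k + f j k i + f k i j = 0) : ∑ i, ∑ j, ∑ k, f i j k = 0 := by
  have rotate_once : ∑ i, ∑ j, ∑ k, f j k i = ∑ i, ∑ j, ∑ k, f i j k := sum_comm_cycle.symm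
  have rotate_twice : ∑ i, ∑ j, ∑ k, f k i j = ∑ i, ∑ j, ∑ k, f i j k := sum_comm_cycle
  have three_nsmul_sum : 3 • ∑ i, ∑ j, ∑ k, f i j k = 0 :=
    calc 3 • ∑ i, ∑ j, ∑ k, f i j k
        = ∑ i, ∑ j, ∑ k, f i j k + ∑ i, ∑ j, ∑ k, f j k i + ∑ i, ∑ j, ∑ k, f k i j := by
          rw [rotate_once, rotate_twice, succ_nsmul, two_nsmul]
      _ = ∑ i, ∑ j, ∑ k, (f i j k + f j k i + f k i j) := by simp only [sum_add_distrib]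
      _ = 0 := by simp only [hf, sum_const_zero]
  exact (nsmul_eq_zero_iff_right three_ne_zero).mp three_nsmul_sum

theorem sum_mul_eq_zero_of_cyclic {ι A : Type*} [Fintype ι] [NonUnitalNonAssocSemiring A]
    [IsAddTorsionFree A] (T ω : ι → ι → ι → A)
    (hT : ∀ i j k, T i j k + T j k i + T k i j = 0) (hω : ∀ i j k, ω j k i = ω i j k) :
    ∑ i, ∑ j, ∑ k, T i j k * ω i j k = 0 :=
  sum_eq_zero_of_cyclic_sum_eq_zero _ fun i j k => by
    rw [hω i j k, ← hω k i j, ← add_mul, ← add_mul, hT, zero_mul]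

section Curvature

variable {ι A : Type*} (R : ι → ι → ι → ι → A)

theorem cyclic_sum_first_third_fourth_eq_zero [AddCommGroup A]
    (hskew : ∀ i j k l, R j i k l = -R i j k l)
    (hbianchi : ∀ i j k l, R i j k l + R i k l j + R i l j k = 0) (i j a b : ι) :
    R i j a b + R a j b i + R b j i a = 0 := by
  rw [hskew j i, hskew j a, hskew j b, ← neg_add, ← neg_add, hbianchi, neg_zero]

theorem Q_contraction_vanishes_general [Fintype ι] [NonUnitalNonAssocRing A] [IsAddTorsionFree A]
    (ψ : ι → ι → ι → ι → A) (hskew : ∀ i j k l, R j i k l = -R i j k l)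
    (hbianchi : ∀ i j k l, R i j k l + R i k l j + R i l j k = 0)
    (hψ : ∀ a b k i, ψ b i k a = ψ a b k i) (j k : ι) :
    ∑ i, ∑ a, ∑ b, R i j a b * ψ a b k i = 0 :=
  sum_mul_eq_zero_of_cyclic (fun i a b => R i j a b) (fun i a b => ψ a b k i)
    (fun i a b => cyclic_sum_first_third_fourth_eq_zero R hskew hbianchi i j a b)
    (fun i a b => hψ a b k i)

end Curvature

/-- Lemma `riccilemma`: for an algebraic curvature tensor R, the contraction of
`Q_{ijkl} = R_{ijab} ψ_{abkl}` over its first and last indices vanishes. -/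
theorem Q_contraction_vanishes (R : Fin 7 → Fin 7 → Fin 7 → Fin 7 → ℝ)
    (h1 : ∀ i j k l, R j i k l = -R i j k l)
    (h2 : ∀ i j k l, R i j l k = -R i j k l)
    (hbianchi : ∀ i j k l, R i j k l + R i k l j + R i l j k = 0) :
    ∀ j k : Fin 7, (∑ i, ∑ a, ∑ b, R i j a b * psi a b k i) = 0 :=
  Q_contraction_vanishes_general R psi h1 hbianchi psi_cyclic
end
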